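/- Let α be a real number with −1/2 < α ≤ 1/2, and let j > 0 be the second positive zero of the Bessel function J_α, i.e. J_α(j) = 0 and there exists exactly one z with 0 < z < j and J_α(z) = 0. If ∫₀^j t^{−α} J_α(t) dt = 0, then α ≤ −1/4. -/

import Mathlib

open Real

/-- The Bessel function of the first kind of real order `α`. -/
noncomputable def besselJ (α : ℝ) (t : ℝ) : ℝ :=
  ∑' k : ℕ, (-1 : ℝ) ^ k / ((k.factorial : ℝ) * Real.Gamma (α + k + 1)) *
    (t / 2) ^ (2 * (k : ℝ) + α)

/-- Coefficients of the normalized Bessel series. -/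
noncomputable def bc (a : ℝ) (k : ℕ) : ℝ := (∏ i ∈ Finset.range k, (((i : ℝ) + 1) * (a + i)))⁻¹

lemma cert_P1 (u : ℝ) (h1 : 0 ≤ u) (h2 : u ≤ 6) :
    0 < (999/1000) * u ^ 0 + (-4/9) * u ^ 1 + (8/105) * u ^ 2 + (-32/4851) * u ^ 3 + (32/93555) * u ^ 4 + (-128/10862775) * u ^ 5 + (256/885809925) * u ^ 6 + (-1024/193174702875) * u ^ 7 := by
  have hs : 0 ≤ u - 0 := by linarith
  have ht : 0 ≤ 6 - u := by linarith
  have hst : 0 < (u - 0) + (6 - u) := by norm_num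
  have key : (999/1000) * u ^ 0 + (-4/9) * u ^ 1 + (8/105) * u ^ 2 + (-32/4851) * u ^ 3 + (32/93555) * u ^ 4 + (-128/10862775) * u ^ 5 + (256/885809925) * u ^ 6 + (-1024/193174702875) * u ^ 7 =
    37/10368000 * ((u - 0) ^ 0 * (6 - u) ^ 7) +
    12979/839808000 * ((u - 0) ^ 1 * (6 - u) ^ 6) +
    54053/1959552000 * ((u - 0) ^ 2 * (6 - u) ^ 5) +
    782027/30177100800 * ((u - 0) ^ 3 * (6 - u) ^ 4) +
    1230241/90531302400 * ((u - 0) ^ 4 * (6 - u) ^ 3) +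
    123538609/31535070336000 * ((u - 0) ^ 5 * (6 - u) ^ 2) +
    5656705577/9428986030464000 * ((u - 0) ^ 6 * (6 - u) ^ 1) +
    282771977/5657391618278400 * ((u - 0) ^ 7 * (6 - u) ^ 0) := by ring
  rw [key]
  rcases hs.eq_or_lt with h | h
  · have hv : u = 0 := by linarith
    rw [hv]; norm_num
  · positivity

lemma cert_P2 (u : ℝ) (h1 : 6 ≤ u) (h2 : u ≤ 12) :
    0 < (999/1000) * u ^ 0 + (-4/9) * u ^ 1 + (8/105) * u ^ 2 + (-32/4851) * u ^ 3 + (32/93555) * u ^ 4 + (-128/10862775) * u ^ 5 + (256/885809925) * u ^ 6 + (-1024/193174702875) * u ^ 7 := by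
  have hs : 0 ≤ u - 6 := by linarith
  have ht : 0 ≤ 12 - u := by linarith
  have hst : 0 < (u - 6) + (12 - u) := by norm_num
  have key : (999/1000) * u ^ 0 + (-4/9) * u ^ 1 + (8/105) * u ^ 2 + (-32/4851) * u ^ 3 + (32/93555) * u ^ 4 + (-128/10862775) * u ^ 5 + (256/885809925) * u ^ 6 + (-1024/193174702875) * u ^ 7 =
    282771977/5657391618278400 * ((u - 6) ^ 0 * (12 - u) ^ 7) +
    217224743/2175919853184000 * ((u - 6) ^ 1 * (12 - u) ^ 6) +
    411697807/448999334784000 * ((u - 6) ^ 2 * (12 - u) ^ 5) +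
    20284027003/5657391618278400 * ((u - 6) ^ 3 * (12 - u) ^ 4) +
    6679731007/1131478323655680 * ((u - 6) ^ 4 * (12 - u) ^ 3) +
    44976063739/9428986030464000 * ((u - 6) ^ 5 * (12 - u) ^ 2) +
    52231667387/28286958091392000 * ((u - 6) ^ 6 * (12 - u) ^ 1) +
    7253570029/28286958091392000 * ((u - 6) ^ 7 * (12 - u) ^ 0) := by ring
  rw [key]
  rcases hs.eq_or_lt with h | h
  · have hv : u = 6 := by linarith
    rw [hv]; norm_num
  · positivity

lemma cert_A4 (a : ℝ) (h1 : 3/4 ≤ a) (h2 : a ≤ 3/2) :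
    0 < (-8/3) * a ^ 0 + (26/3) * a ^ 1 + (5) * a ^ 2 + (-2) * a ^ 3 + (-1) * a ^ 4 := by
  have hs : 0 ≤ a - 3/4 := by linarith
  have ht : 0 ≤ 3/2 - a := by linarith
  have hst : 0 < (a - 3/4) + (3/2 - a) := by norm_num
  have key : (-8/3) * a ^ 0 + (26/3) * a ^ 1 + (5) * a ^ 2 + (-2) * a ^ 3 + (-1) * a ^ 4 =
    4213/243 * ((a - 3/4) ^ 0 * (3/2 - a) ^ 4) +
    23248/243 * ((a - 3/4) ^ 1 * (3/2 - a) ^ 3) +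
    14408/81 * ((a - 3/4) ^ 2 * (3/2 - a) ^ 2) +
    31936/243 * ((a - 3/4) ^ 3 * (3/2 - a) ^ 1) +
    7504/243 * ((a - 3/4) ^ 4 * (3/2 - a) ^ 0) := by ring
  rw [key]
  rcases hs.eq_or_lt with h | h
  · have hv : a = 3/4 := by linarith
    rw [hv]; norm_num
  · positivity

lemma cert_A12 (a : ℝ) (h1 : 3/4 ≤ a) (h2 : a ≤ 3/2) :
    0 < (-8640/7) * a ^ 0 + (7488/5) * a ^ 1 + (3252/5) * a ^ 2 + (-356) * a ^ 3 + (-213) * a ^ 4 + (-5) * a ^ 5 + (9) * a ^ 6 + (1) * a ^ 7 := by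
  have hs : 0 ≤ a - 3/4 := by linarith
  have ht : 0 ≤ 3/2 - a := by linarith
  have hst : 0 < (a - 3/4) + (3/2 - a) := by norm_num
  have key : (-8640/7) * a ^ 0 + (7488/5) * a ^ 1 + (3252/5) * a ^ 2 + (-356) * a ^ 3 + (-213) * a ^ 4 + (-5) * a ^ 5 + (9) * a ^ 6 + (1) * a ^ 7 =
    89039/315 * ((a - 3/4) ^ 0 * (3/2 - a) ^ 7) +
    283886/27 * ((a - 3/4) ^ 1 * (3/2 - a) ^ 6) +
    21707188/405 * ((a - 3/4) ^ 2 * (3/2 - a) ^ 5) +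
    9494024/81 * ((a - 3/4) ^ 3 * (3/2 - a) ^ 4) +
    1196272/9 * ((a - 3/4) ^ 4 * (3/2 - a) ^ 3) +
    32311648/405 * ((a - 3/4) ^ 5 * (3/2 - a) ^ 2) +
    1845440/81 * ((a - 3/4) ^ 6 * (3/2 - a) ^ 1) +
    654464/315 * ((a - 3/4) ^ 7 * (3/2 - a) ^ 0) := by ring
  rw [key]
  rcases hs.eq_or_lt with h | h
  · have hv : a = 3/4 := by linarith
    rw [hv]; norm_num
  · positivity

lemma bP_pos (u : ℝ) (h1 : 0 ≤ u) (h2 : u ≤ 12) :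
    1 / 1000 ≤ ∑ k ∈ Finset.range 8, (-1) ^ k * bc (3 / 4) k / (2 * k + 1) * u ^ k := by
  have key : ∑ k ∈ Finset.range 8, (-1) ^ k * bc (3 / 4) k / (2 * k + 1) * u ^ k =
      (1) * u ^ 0 + (-4/9) * u ^ 1 + (8/105) * u ^ 2 + (-32/4851) * u ^ 3 + (32/93555) * u ^ 4 + (-128/10862775) * u ^ 5 + (256/885809925) * u ^ 6 + (-1024/193174702875) * u ^ 7 := by
    simp only [Finset.sum_range_succ, Finset.sum_range_zero, bc, Finset.prod_range_succ,
      Finset.prod_range_zero]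
    push_cast
    ring
  rw [key]
  rcases le_total u 6 with h | h
  · linarith [cert_P1 u h1 h]
  · linarith [cert_P2 u h h2]

lemma bS5_neg (a : ℝ) (h1 : 3 / 4 ≤ a) (h2 : a ≤ 3 / 2) :
    ∑ k ∈ Finset.range 5, (-1) ^ k * (bc a k * 4 ^ k) < 0 := by
  have key : (∑ k ∈ Finset.range 5, (-1) ^ k * (bc a k * 4 ^ k)) * (a * (a+1) * (a+2) * (a+3)) =
      - ((-8/3) * a ^ 0 + (26/3) * a ^ 1 + (5) * a ^ 2 + (-2) * a ^ 3 + (-1) * a ^ 4) := by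
    simp only [Finset.sum_range_succ, Finset.sum_range_zero, bc, Finset.prod_range_succ,
      Finset.prod_range_zero]
    push_cast
    have e0 : a ≠ 0 := by linarith
    field_simp
    ring
  have h := cert_A4 a h1 h2
  have hp : 0 < a * (a+1) * (a+2) * (a+3) := by positivity
  by_contra hc
  push Not at hc
  nlinarith [mul_nonneg hc hp.le]

lemma bS8_pos (a : ℝ) (h1 : 3 / 4 ≤ a) (h2 : a ≤ 3 / 2) :
    0 < ∑ k ∈ Finset.range 8, (-1) ^ k * (bc a k * 12 ^ k) := by
  have key : (∑ k ∈ Finset.range 8, (-1) ^ k * (bc a k * 12 ^ k)) *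
      (a * (a+1) * (a+2) * (a+3) * (a+4) * (a+5) * (a+6)) =
      (-8640/7) * a ^ 0 + (7488/5) * a ^ 1 + (3252/5) * a ^ 2 + (-356) * a ^ 3 + (-213) * a ^ 4 + (-5) * a ^ 5 + (9) * a ^ 6 + (1) * a ^ 7 := by
    simp only [Finset.sum_range_succ, Finset.sum_range_zero, bc, Finset.prod_range_succ,
      Finset.prod_range_zero]
    push_cast
    have e0 : a ≠ 0 := by linarith
    field_simp
    ring
  have h := cert_A12 a h1 h2
  have hp : 0 < a * (a+1) * (a+2) * (a+3) * (a+4) * (a+5) * (a+6) := by positivity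
  rw [← key] at h
  exact (pos_iff_pos_of_mul_pos h).2 hp

lemma bc_zero (a : ℝ) : bc a 0 = 1 := by simp [bc]

lemma bc_succ (a : ℝ) (k : ℕ) : bc a (k + 1) = bc a k / (((k : ℝ) + 1) * (a + k)) := by
  simp only [bc, Finset.prod_range_succ, mul_inv, div_eq_mul_inv]

lemma bc_pos {a : ℝ} (ha : 0 < a) (k : ℕ) : 0 < bc a k := by
  unfold bc
  positivity

lemma bc_le {a : ℝ} (ha : 3 / 4 ≤ a) (k : ℕ) : bc a k ≤ (4 / 3) ^ k / k.factorial := by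
  have ha0 : 0 < a := by linarith
  induction k with
  | zero => simp [bc_zero]
  | succ k ih =>
    rw [bc_succ, div_le_iff₀ (by positivity)]
    refine ih.trans ?_
    rw [Nat.factorial_succ, pow_succ]
    push_cast
    have : (4 / 3 : ℝ) ^ k * (4 / 3) / (((k : ℝ) + 1) * k.factorial) * (((k : ℝ) + 1) * (a + k))
        = (4 / 3) ^ k / k.factorial * (4 / 3 * (a + k)) := by
      field_simp
    rw [this]
    refine le_mul_of_one_le_right (by positivity) ?_
    have : (0 : ℝ) ≤ k := k.cast_nonneg
    linarith

/-- Normalized Bessel series. -/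
noncomputable def bf (a y : ℝ) : ℝ := ∑' k : ℕ, (-1) ^ k * (bc a k * y ^ k)

lemma bterm_le {a y : ℝ} (ha : 3 / 4 ≤ a) (hy : 0 ≤ y) (hy2 : y ≤ 12) (k : ℕ) :
    ‖(-1) ^ k * (bc a k * y ^ k)‖ ≤ 16 ^ k / k.factorial := by
  have h0 := bc_pos (a := a) (by linarith) k
  rw [norm_mul, norm_pow, norm_neg, norm_one, one_pow, one_mul, Real.norm_of_nonneg (by positivity)]
  calc bc a k * y ^ k ≤ (4 / 3) ^ k / k.factorial * 12 ^ k := by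
        gcongr
        exact bc_le ha k
    _ = 16 ^ k / k.factorial := by
        rw [div_mul_eq_mul_div, ← mul_pow]; norm_num

lemma bf_cont {a : ℝ} (ha : 3 / 4 ≤ a) : ContinuousOn (bf a) (Set.Icc 0 12) := by
  unfold bf
  refine continuousOn_tsum (u := fun k : ℕ => (16 : ℝ) ^ k / (k.factorial : ℝ)) (fun k => by fun_prop)
    (Real.summable_pow_div_factorial 16) (fun k y hy => bterm_le ha hy.1 hy.2 k)

lemma bf_tail {a y : ℝ} (ha : 3 / 4 ≤ a) (hy : 0 ≤ y) (hy2 : y ≤ 12) :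
    ∑ k ∈ Finset.range 8, (-1) ^ k * (bc a k * y ^ k) ≤ bf a y ∧
    bf a y ≤ ∑ k ∈ Finset.range 5, (-1) ^ k * (bc a k * y ^ k) := by
  have hs : Summable (fun k : ℕ => (-1) ^ k * (bc a k * y ^ k)) :=
    Summable.of_norm_bounded (Real.summable_pow_div_factorial 16) (bterm_le ha hy hy2)
  have hsplit := hs.sum_add_tsum_nat_add 4
  have hs4 := ((summable_nat_add_iff 4).2 hs)
  have he : ∀ k : ℕ, (-1 : ℝ) ^ (k + 4) * (bc a (k + 4) * y ^ (k + 4))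
      = (-1) ^ k * (bc a (k + 4) * y ^ (k + 4)) := by
    intro k; rw [pow_add (-1 : ℝ)]; norm_num
  simp_rw [he] at hsplit hs4
  have hanti : Antitone (fun k : ℕ => bc a (k + 4) * y ^ (k + 4)) := by
    refine antitone_nat_of_succ_le fun k => ?_
    have h0 := bc_pos (a := a) (by linarith) (k + 4)
    rw [show k + 1 + 4 = (k + 4) + 1 by ring, bc_succ, pow_succ y (k + 4)]
    have hk : (0 : ℝ) ≤ k := k.cast_nonneg
    have : bc a (k + 4) / (((k + 4 : ℕ) + 1 : ℝ) * (a + (k + 4 : ℕ))) * (y ^ (k + 4) * y)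
        = bc a (k + 4) * y ^ (k + 4) * (y / (((k + 4 : ℕ) + 1 : ℝ) * (a + (k + 4 : ℕ)))) := by
      ring
    rw [this]
    refine mul_le_of_le_one_right (by positivity) ?_
    push_cast
    rw [div_le_one (by positivity)]
    nlinarith
  have ht := hs4.hasSum.tendsto_sum_nat
  have l1 := hanti.alternating_series_le_tendsto ht 2
  have l2 := hanti.tendsto_le_alternating_series ht 0
  unfold bf
  rw [← hsplit]
  norm_num [Finset.sum_range_succ] at l1 l2 ⊢
  constructor <;> linarith

lemma bc_gamma {α : ℝ} (hα : -1 / 4 < α) (k : ℕ) :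
    1 / ((k.factorial : ℝ) * Real.Gamma (α + k + 1)) = bc (α + 1) k / Real.Gamma (α + 1) := by
  induction k with
  | zero => simp [bc_zero]
  | succ k ih =>
    have hk : (0 : ℝ) ≤ k := k.cast_nonneg
    have h1 : Real.Gamma (α + (k + 1 : ℕ) + 1) = (α + k + 1) * Real.Gamma (α + k + 1) := by
      rw [← Real.Gamma_add_one (by linarith)]
      push_cast
      ring_nf
    have hne : α + k + 1 ≠ 0 := by linarith
    have hne' : α + 1 + k ≠ 0 := by linarith
    rw [h1, bc_succ, div_right_comm, ← ih, Nat.factorial_succ]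
    have hG : Real.Gamma (α + k + 1) ≠ 0 := (Real.Gamma_pos_of_pos (by linarith)).ne'
    push_cast
    field_simp
    ring

lemma besselJ_eq {α t : ℝ} (hα : -1 / 4 < α) (ht : 0 < t) :
    besselJ α t = (t / 2) ^ α / Real.Gamma (α + 1) * bf (α + 1) (t ^ 2 / 4) := by
  unfold besselJ bf
  rw [← tsum_mul_left]
  congr 1
  ext k
  have h2 : (0 : ℝ) < t / 2 := by positivity
  have := bc_gamma hα k
  rw [Real.rpow_add h2, show (2 * (k : ℝ)) = ((2 * k : ℕ) : ℝ) by push_cast; ring,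
    Real.rpow_natCast, pow_mul, show (t / 2) ^ 2 = t ^ 2 / 4 by ring,
    ← mul_one_div, this]
  ring

lemma beta_int {p q : ℝ} (hp : 0 < p) (hq : 0 < q) :
    IntervalIntegrable (fun x : ℝ => x ^ (p - 1) * (1 - x) ^ (q - 1)) MeasureTheory.volume 0 1 ∧
    ∫ x in (0 : ℝ)..1, x ^ (p - 1) * (1 - x) ^ (q - 1) = ProbabilityTheory.beta p q := by
  have hc := Complex.betaIntegral_convergent (u := p) (v := q) (by simpa) (by simpa)
  have heq : ∀ x ∈ Set.Icc (0 : ℝ) 1, (x : ℂ) ^ ((p : ℂ) - 1) * (1 - (x : ℂ)) ^ ((q : ℂ) - 1) =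
      ((x ^ (p - 1) * (1 - x) ^ (q - 1) : ℝ) : ℂ) := by
    intro x hx
    push_cast
    rw [Complex.ofReal_cpow hx.1, Complex.ofReal_cpow (by linarith [hx.2])]
    push_cast
    rfl
  have hi : IntervalIntegrable (fun x : ℝ => ((x ^ (p - 1) * (1 - x) ^ (q - 1) : ℝ) : ℂ))
      MeasureTheory.volume 0 1 := by
    refine hc.congr ?_
    intro x hx
    rw [Set.uIoc_of_le zero_le_one] at hx
    exact heq x ⟨hx.1.le, hx.2⟩
  constructor
  · have := hi.1.re
    rw [intervalIntegrable_iff_integrableOn_Ioc_of_le zero_le_one, MeasureTheory.IntegrableOn]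
    simpa using this
  · rw [ProbabilityTheory.beta_eq_betaIntegralReal p q hp hq, Complex.betaIntegral]
    rw [intervalIntegral.integral_congr (g := fun x : ℝ =>
      ((x ^ (p - 1) * (1 - x) ^ (q - 1) : ℝ) : ℂ))]
    · rw [intervalIntegral.integral_ofReal, Complex.ofReal_re]
    · intro x hx
      rw [Set.uIcc_of_le zero_le_one] at hx
      exact heq x hx

lemma beta_bc {a : ℝ} (ha : 3 / 4 < a) (k : ℕ) :
    bc (3 / 4) k * ProbabilityTheory.beta (k + 3 / 4) (a - 3 / 4) =
      bc a k * ProbabilityTheory.beta (3 / 4) (a - 3 / 4) := by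
  induction k with
  | zero => simp [bc_zero]
  | succ k ih =>
    have hk : (0 : ℝ) ≤ k := k.cast_nonneg
    have h1 : ProbabilityTheory.beta ((k + 1 : ℕ) + 3 / 4) (a - 3 / 4) =
        ProbabilityTheory.beta (k + 3 / 4) (a - 3 / 4) * ((3 / 4 + k) / (a + k)) := by
      unfold ProbabilityTheory.beta
      have e1 : ((k + 1 : ℕ) : ℝ) + 3 / 4 = (k + 3 / 4) + 1 := by push_cast; ring
      have e2 : ((k : ℝ) + 3 / 4) + 1 + (a - 3 / 4) = (k + a) + 1 := by ring
      have e3 : ((k : ℝ) + 3 / 4) + (a - 3 / 4) = (k + a) := by ring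
      rw [e1, e2, e3, Real.Gamma_add_one (by linarith), Real.Gamma_add_one (by linarith)]
      have hne : (k : ℝ) + a ≠ 0 := by linarith
      have hne' : a + (k : ℝ) ≠ 0 := by linarith
      have hG : Real.Gamma (k + a) ≠ 0 := (Real.Gamma_pos_of_pos (by linarith)).ne'
      field_simp
      ring
    rw [h1, bc_succ, bc_succ]
    have hne' : a + (k : ℝ) ≠ 0 := by linarith
    have hne2 : 3 / 4 + (k : ℝ) ≠ 0 := by linarith
    have : bc (3 / 4) k / (((k : ℝ) + 1) * (3 / 4 + k)) *
        (ProbabilityTheory.beta (k + 3 / 4) (a - 3 / 4) * ((3 / 4 + k) / (a + k))) =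
        (bc (3 / 4) k * ProbabilityTheory.beta (k + 3 / 4) (a - 3 / 4)) / ((k + 1) * (a + k)) := by
      field_simp
    rw [this, ih]
    ring

lemma bQ_pos {a y : ℝ} (ha : 3 / 4 < a) (hy : 0 ≤ y) (hy2 : y ≤ 12) :
    0 < ∑ k ∈ Finset.range 8, (-1) ^ k * bc a k / (2 * k + 1) * y ^ k := by
  have hq : 0 < a - 3 / 4 := by linarith
  set B := ProbabilityTheory.beta (3 / 4) (a - 3 / 4) with hB
  have hBpos : 0 < B := ProbabilityTheory.beta_pos (by norm_num) hq
  set w : ℝ → ℝ := fun x => x ^ ((3 / 4 : ℝ) - 1) * (1 - x) ^ (a - 3 / 4 - 1) with hw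
  obtain ⟨hwi, hwB⟩ := beta_int (p := 3 / 4) (by norm_num) hq
  have hmom : ∀ k : ℕ, ∫ x in (0 : ℝ)..1, x ^ k * w x =
      ProbabilityTheory.beta (k + 3 / 4) (a - 3 / 4) := by
    intro k
    rw [← (beta_int (p := k + 3 / 4) (by positivity) hq).2]
    refine intervalIntegral.integral_congr_ae (Filter.Eventually.of_forall fun x hx => ?_)
    rw [Set.uIoc_of_le zero_le_one] at hx
    rw [hw]
    dsimp only
    rw [← mul_assoc, ← Real.rpow_natCast, ← Real.rpow_add hx.1]
    congr 2
    ring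
  have hint : ∀ k : ℕ, IntervalIntegrable (fun x => x ^ k * w x) MeasureTheory.volume 0 1 :=
    fun k => hwi.continuousOn_mul (by fun_prop)
  have hmono : ∫ x in (0 : ℝ)..1, (1 / 1000) * w x ≤
      ∫ x in (0 : ℝ)..1, ∑ k ∈ Finset.range 8,
        ((-1) ^ k * bc (3 / 4) k / (2 * k + 1) * y ^ k) * (x ^ k * w x) := by
    refine intervalIntegral.integral_mono_on zero_le_one (hwi.const_mul _) ?_ ?_
    · have := IntervalIntegrable.sum (Finset.range 8) (fun k _ => (hint k).const_mul
        ((-1) ^ k * bc (3 / 4) k / (2 * k + 1) * y ^ k))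
      refine this.congr fun x _ => ?_
      simp only [Finset.sum_apply]
    · intro x hx
      have hwx : 0 ≤ w x := mul_nonneg (Real.rpow_nonneg hx.1 _)
        (Real.rpow_nonneg (by linarith [hx.2]) _)
      have := bP_pos (y * x) (mul_nonneg hy hx.1) (by nlinarith [hx.1, hx.2])
      refine (mul_le_mul_of_nonneg_right this hwx).trans (le_of_eq ?_)
      rw [Finset.sum_mul]
      refine Finset.sum_congr rfl fun k _ => ?_
      rw [mul_pow]; ring
  rw [intervalIntegral.integral_finsetSum (fun k _ => (hint k).const_mul _)] at hmono
  simp only [intervalIntegral.integral_const_mul, hmom] at hmono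
  rw [hwB] at hmono
  have : ∑ k ∈ Finset.range 8, ((-1) ^ k * bc (3 / 4) k / (2 * k + 1) * y ^ k) *
      ProbabilityTheory.beta (k + 3 / 4) (a - 3 / 4) =
      (∑ k ∈ Finset.range 8, (-1) ^ k * bc a k / (2 * k + 1) * y ^ k) * B := by
    rw [Finset.sum_mul]
    refine Finset.sum_congr rfl fun k _ => ?_
    linear_combination ((-1) ^ k / (2 * (k : ℝ) + 1) * y ^ k) * beta_bc ha k
  rw [this] at hmono
  have h2 : 0 < (∑ k ∈ Finset.range 8, (-1) ^ k * bc a k / (2 * k + 1) * y ^ k) * B :=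
    lt_of_lt_of_le (by positivity) hmono
  exact (pos_iff_pos_of_mul_pos h2).2 hBpos

lemma bS_integral (a j : ℝ) :
    ∫ t in (0 : ℝ)..j, ∑ k ∈ Finset.range 8, (-1) ^ k * (bc a k * (t ^ 2 / 4) ^ k) =
      j * ∑ k ∈ Finset.range 8, (-1) ^ k * bc a k / (2 * k + 1) * (j ^ 2 / 4) ^ k := by
  rw [intervalIntegral.integral_finsetSum
    (fun k _ => (by fun_prop : Continuous _).intervalIntegrable _ _), Finset.mul_sum]
  refine Finset.sum_congr rfl fun k _ => ?_
  have : ∀ t : ℝ, (-1) ^ k * (bc a k * (t ^ 2 / 4) ^ k) = ((-1) ^ k * bc a k / 4 ^ k) * t ^ (2 * k) := by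
    intro t
    rw [div_pow, ← pow_mul]; ring
  simp_rw [this]
  rw [intervalIntegral.integral_const_mul, integral_pow, div_pow, ← pow_mul]
  have h : (2 * (k : ℝ) + 1) ≠ 0 := by positivity
  simp only [ne_eq, Nat.add_eq_zero_iff, one_ne_zero, and_false, not_false_eq_true, zero_pow]
  push_cast
  field_simp
  ring

theorem stmt11 (α : ℝ) (hα₁ : -1 / 2 < α) (hα₂ : α ≤ 1 / 2)
    (j : ℝ) (hj : 0 < j) (hjzero : besselJ α j = 0)
    (hsecond : ∃! z : ℝ, 0 < z ∧ z < j ∧ besselJ α z = 0)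
    (hroot : ∫ t in (0 : ℝ)..j, t ^ (-α) * besselJ α t = 0) :
    α ≤ -1 / 4 := by
  by_contra hcon
  push Not at hcon
  have ha : 3 / 4 < α + 1 := by linarith
  have ha2 : α + 1 ≤ 3 / 2 := by linarith
  have hG : 0 < Real.Gamma (α + 1) := Real.Gamma_pos_of_pos (by linarith)
  have hcont := bf_cont ha.le
  have h0 : bf (α + 1) 0 = 1 := by
    unfold bf
    rw [tsum_eq_single 0 (fun k hk => by simp [hk])]
    simp [bc_zero]
  have h4 : bf (α + 1) 4 < 0 :=
    (bf_tail ha.le (by norm_num) (by norm_num)).2.trans_lt (bS5_neg _ ha.le ha2)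
  have h12 : 0 < bf (α + 1) 12 :=
    (bS8_pos _ ha.le ha2).trans_le (bf_tail ha.le (by norm_num) (by norm_num)).1
  have hjle : j ^ 2 / 4 ≤ 12 := by
    by_contra hjj
    push Not at hjj
    obtain ⟨y1, hy1, e1⟩ := intermediate_value_Icc' (by norm_num : (0 : ℝ) ≤ 4)
      (hcont.mono (Set.Icc_subset_Icc_right (by norm_num))) (show (0 : ℝ) ∈ _ from ⟨h4.le, by linarith⟩)
    obtain ⟨y2, hy2, e2⟩ := intermediate_value_Icc (by norm_num : (4 : ℝ) ≤ 12)
      (hcont.mono (Set.Icc_subset_Icc_left (by norm_num))) (show (0 : ℝ) ∈ _ from ⟨h4.le, h12.le⟩)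
    have hy1p : 0 < y1 := lt_of_le_of_ne hy1.1 (by rintro rfl; linarith)
    have hy1n : y1 ≠ 4 := by rintro rfl; linarith
    have hlt : y1 < y2 := lt_of_lt_of_le (lt_of_le_of_ne hy1.2 hy1n) hy2.1
    have hz : ∀ y, 0 < y → y ≤ 12 → bf (α + 1) y = 0 →
        0 < 2 * √y ∧ 2 * √y < j ∧ besselJ α (2 * √y) = 0 := by
      intro y hy hy12 hb
      have hs := Real.sqrt_pos.2 hy
      have hsq := Real.sq_sqrt hy.le
      refine ⟨by positivity, ?_, ?_⟩
      · nlinarith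
      · rw [besselJ_eq hcon (by positivity), show (2 * √y) ^ 2 / 4 = y by rw [mul_pow, hsq]; ring, hb,
          mul_zero]
    have := hsecond.unique (hz y1 hy1p (by linarith [hy1.2]) e1) (hz y2 (by linarith) hy2.2 e2)
    have hs := Real.sqrt_lt_sqrt hy1p.le hlt
    linarith
  have hK : ∀ t ∈ Set.uIoc 0 j, t ^ (-α) * besselJ α t =
      ((1 / 2) ^ α / Real.Gamma (α + 1)) * bf (α + 1) (t ^ 2 / 4) := by
    intro t ht
    rw [Set.uIoc_of_le hj.le] at ht
    rw [besselJ_eq hcon ht.1, show t / 2 = t * (1 / 2) by ring,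
      Real.mul_rpow ht.1.le (by norm_num), Real.rpow_neg ht.1.le]
    have : t ^ α ≠ 0 := (Real.rpow_pos_of_pos ht.1 α).ne'
    field_simp
  rw [intervalIntegral.integral_congr_ae (Filter.Eventually.of_forall hK),
    intervalIntegral.integral_const_mul] at hroot
  have hKpos : 0 < (1 / 2 : ℝ) ^ α / Real.Gamma (α + 1) := by positivity
  have hI : ∫ t in (0 : ℝ)..j, bf (α + 1) (t ^ 2 / 4) = 0 :=
    (mul_eq_zero.1 hroot).resolve_left hKpos.ne'
  have hmem : ∀ t ∈ Set.Icc 0 j, t ^ 2 / 4 ∈ Set.Icc (0 : ℝ) 12 := by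
    intro t ht
    refine ⟨by positivity, ?_⟩
    nlinarith [ht.1, ht.2]
  have hle : ∫ t in (0 : ℝ)..j, ∑ k ∈ Finset.range 8, (-1) ^ k * (bc (α + 1) k * (t ^ 2 / 4) ^ k) ≤
      ∫ t in (0 : ℝ)..j, bf (α + 1) (t ^ 2 / 4) := by
    refine intervalIntegral.integral_mono_on hj.le
      ((by fun_prop : Continuous _).intervalIntegrable _ _) ?_ ?_
    · refine ContinuousOn.intervalIntegrable ?_
      rw [Set.uIcc_of_le hj.le]
      exact hcont.comp (f := fun t : ℝ => t ^ 2 / 4) (by fun_prop) hmem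
    · intro t ht
      exact (bf_tail ha.le (hmem t ht).1 (hmem t ht).2).1
  rw [hI, bS_integral] at hle
  have := mul_pos hj (bQ_pos ha (by positivity) hjle)
  linarith
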